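/- Let A be a C*-algebra and let {J_λ}_{λ∈Λ} be a family of closed two-sided ideals of A. Define p : A → ℝ by p(a) = sup{‖a·x‖ : λ ∈ Λ, x ∈ J_λ, ‖x‖ ≤ 1}. Then p is a C*-seminorm on A dominated by the norm: p is subadditive and absolutely homogeneous, p(a·b) ≤ p(a)·p(b), p(a*) = p(a), p(a*·a) = p(a)², and p(a) ≤ ‖a‖ for all a, b ∈ A. -/

import Mathlib

/-!
The defining estimate of `p` rescales to `‖a * y‖ ≤ p a * ‖y‖` for every `y` in some `J l`, so `p a`
is the least common bound for the operators of left multiplication by `a` on the ideals. Hence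
subadditivity, homogeneity, submultiplicativity and `p a ≤ ‖a‖` are the usual facts about operator
norms (the last two because `b * x ∈ J l` for `x ∈ J l`, resp. `‖a * x‖ ≤ ‖a‖ * ‖x‖`).

The C*-identity of `A` gives `‖b * x‖ ^ 2 = ‖star x * (star b * (b * x))‖ ≤ ‖star b * (b * x)‖` when
`‖x‖ ≤ 1`. With `b = star a` and `star a * x ∈ J l`, this bounds `‖star a * x‖ ^ 2` by
`p a * ‖star a * x‖`, so `p (star a) ≤ p a` without needing the ideals to be self-adjoint. With
`b = a` it gives `p a ^ 2 ≤ p (star a * a)`.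
-/

lemma norm_mul_sq_le_of_norm_le_one {A : Type*} [NonUnitalCStarAlgebra A] (b x : A)
    (hx : ‖x‖ ≤ 1) : ‖b * x‖ ^ 2 ≤ ‖star b * (b * x)‖ := by
  calc ‖b * x‖ ^ 2 = ‖star (b * x) * (b * x)‖ := by rw [CStarRing.norm_star_mul_self, sq]
    _ = ‖star x * (star b * (b * x))‖ := by rw [star_mul, mul_assoc]
    _ ≤ ‖star x‖ * ‖star b * (b * x)‖ := norm_mul_le _ _
    _ ≤ 1 * ‖star b * (b * x)‖ := by rw [norm_star]; gcongr
    _ = _ := one_mul _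


/-- Let `A` be a C*-algebra and `{J l}` a family of closed two-sided ideals
of `A`. Define `p a = sup {‖a * x‖ : l, x ∈ J l, ‖x‖ ≤ 1}`. Then `p` is a C*-seminorm on `A`
dominated by the norm: `p` is subadditive and absolutely homogeneous,
`p (a * b) ≤ p a * p b`, `p (star a) = p a`, `p (star a * a) = p a ^ 2`, and `p a ≤ ‖a‖`. -/
theorem stmt_2
    {A : Type*} [NonUnitalCStarAlgebra A] {Λ : Type*}
    (J : Λ → Set A)
    (hzero : ∀ l, (0 : A) ∈ J l)
    (hadd : ∀ l, ∀ x ∈ J l, ∀ y ∈ J l, x + y ∈ J l)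
    (hsmul : ∀ l (c : ℂ), ∀ x ∈ J l, c • x ∈ J l)
    (hclosed : ∀ l, IsClosed (J l))
    (hmul_left : ∀ l (a : A), ∀ x ∈ J l, a * x ∈ J l)
    (hmul_right : ∀ l (a : A), ∀ x ∈ J l, x * a ∈ J l)
    (p : A → ℝ)
    (hp : ∀ a : A, p a = sSup {c : ℝ | ∃ l, ∃ x ∈ J l, ‖x‖ ≤ 1 ∧ c = ‖a * x‖}) :
    (∀ a b : A, p (a + b) ≤ p a + p b) ∧
    (∀ (c : ℂ) (a : A), p (c • a) = ‖c‖ * p a) ∧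
    (∀ a b : A, p (a * b) ≤ p a * p b) ∧
    (∀ a : A, p (star a) = p a) ∧
    (∀ a : A, p (star a * a) = p a ^ 2) ∧
    (∀ a : A, p a ≤ ‖a‖) := by
  -- With no ideals the supremum is `sSup ∅ = 0`, so `p_le` needs the hypothesis `0 ≤ M`.
  have p_nonneg : ∀ a, 0 ≤ p a := by
    intro a
    rw [hp]
    apply Real.sSup_nonneg
    rintro _ ⟨l, x, -, -, rfl⟩
    exact norm_nonneg _
  have p_le : ∀ (a : A) (M : ℝ), 0 ≤ M → (∀ l, ∀ x ∈ J l, ‖x‖ ≤ 1 → ‖a * x‖ ≤ M) → p a ≤ M := by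
    intro a M hM h
    rw [hp]
    refine Real.sSup_le ?_ hM
    rintro _ ⟨l, x, hx, hx1, rfl⟩
    exact h l x hx hx1
  have norm_le_of_le_one : ∀ (a : A) (x : A), ‖x‖ ≤ 1 → ‖a * x‖ ≤ ‖a‖ := fun a x hx =>
    (norm_mul_le a x).trans (mul_le_of_le_one_right (norm_nonneg a) hx)
  have le_p : ∀ (a : A) l, ∀ x ∈ J l, ‖x‖ ≤ 1 → ‖a * x‖ ≤ p a := by
    intro a l x hx hx1
    rw [hp]
    refine le_csSup ⟨‖a‖, ?_⟩ ⟨l, x, hx, hx1, rfl⟩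
    rintro _ ⟨l, x, -, hx1, rfl⟩
    exact norm_le_of_le_one a x hx1
  have le_p_mul : ∀ (a : A) l, ∀ y ∈ J l, ‖a * y‖ ≤ p a * ‖y‖ := by
    intro a l y hy
    rcases eq_or_ne y 0 with rfl | hy0
    · simp
    have hpos : 0 < ‖y‖ := norm_pos_iff.mpr hy0
    have hn : ‖((‖y‖⁻¹ : ℝ) : ℂ)‖ = ‖y‖⁻¹ := by simp
    have h := le_p a l _ (hsmul l ((‖y‖⁻¹ : ℝ) : ℂ) y hy)
      (by rw [norm_smul, hn, inv_mul_cancel₀ hpos.ne'])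
    rw [mul_smul_comm, norm_smul, hn, inv_mul_le_iff₀ hpos] at h
    linarith
  have p_mul : ∀ a b : A, p (a * b) ≤ p a * p b := by
    intro a b
    refine p_le _ _ (mul_nonneg (p_nonneg a) (p_nonneg b)) fun l x hx hx1 => ?_
    rw [mul_assoc]
    exact (le_p_mul a l _ (hmul_left l b x hx)).trans
      (mul_le_mul_of_nonneg_left (le_p b l x hx hx1) (p_nonneg a))
  have p_smul_le : ∀ (c : ℂ) (a : A), p (c • a) ≤ ‖c‖ * p a := by
    intro c a
    refine p_le _ _ (mul_nonneg (norm_nonneg c) (p_nonneg a)) fun l x hx hx1 => ?_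
    rw [smul_mul_assoc, norm_smul]
    exact mul_le_mul_of_nonneg_left (le_p a l x hx hx1) (norm_nonneg c)
  have p_star_le : ∀ a : A, p (star a) ≤ p a := by
    intro a
    refine p_le _ _ (p_nonneg a) fun l x hx hx1 => ?_
    have h1 := norm_mul_sq_le_of_norm_le_one (star a) x hx1
    rw [star_star] at h1
    have h2 := le_p_mul a l _ (hmul_left l (star a) x hx)
    rcases (norm_nonneg (star a * x)).eq_or_lt with h0 | h0
    · rw [← h0]
      exact p_nonneg a
    · refine le_of_mul_le_mul_right ?_ h0
      rw [← sq]
      exact h1.trans h2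
  have p_star : ∀ a : A, p (star a) = p a := fun a =>
    le_antisymm (p_star_le a) (by simpa using p_star_le (star a))
  refine ⟨fun a b => ?_, fun c a => ?_, p_mul, p_star, fun a => ?_, fun a => ?_⟩
  · refine p_le _ _ (add_nonneg (p_nonneg a) (p_nonneg b)) fun l x hx hx1 => ?_
    rw [add_mul]
    exact (norm_add_le _ _).trans (add_le_add (le_p a l x hx hx1) (le_p b l x hx hx1))
  · refine le_antisymm (p_smul_le c a) ?_
    rcases eq_or_ne c 0 with rfl | hc
    · simpa using p_nonneg 0
    -- The reverse inequality is `p_smul_le` for the scalar `c⁻¹` and the element `c • a`.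
    have h := p_smul_le c⁻¹ (c • a)
    rwa [inv_smul_smul₀ hc, norm_inv, le_inv_mul_iff₀ (norm_pos_iff.mpr hc)] at h
  · apply le_antisymm
    · calc p (star a * a) ≤ p (star a) * p a := p_mul _ _
        _ = p a ^ 2 := by rw [p_star, sq]
    · have h : p a ≤ √(p (star a * a)) := by
        refine p_le _ _ (Real.sqrt_nonneg _) fun l x hx hx1 => Real.le_sqrt_of_sq_le ?_
        refine (norm_mul_sq_le_of_norm_le_one a x hx1).trans ?_
        rw [← mul_assoc]
        exact le_p _ l x hx hx1
      exact (Real.le_sqrt (p_nonneg a) (p_nonneg _)).mp h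
  · exact p_le _ _ (norm_nonneg a) fun l x _ hx1 => norm_le_of_le_one a x hx1
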